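/- arXiv:1512.00587 — 3 statements merged into one kernel-verified Lean document; each statement's English description precedes it below -/
import Mathlib

section
/- Let A be a finite alphabet with |A| ≥ 2. For every a ∈ A, the action of G* on Ω^a is extremely proximal: for every closed subset Y ⊊ Ω^a there exists a sequence g_k ∈ G* such that the sets g_k Y converge in the Hausdorff metric to a singleton. -/
/-!
An automorphism of `A^ℤ` that fixes every constant configuration preserves left tails, by
continuity at the constant configurations, and therefore belongs to `G*`. So it suffices to find
automorphisms fixing the constants that bring `Y` close to a given `x ∈ Ω^a \ Y`.

Since `Y` is closed, there is an `n` such that each point of `Y` differs from `x` in one of the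
places `1, …, n`. For `d ≥ n`, exchange the words `a^d` and `x 1 ⋯ x d` wherever they occur with
`a^(d+n)` on their left and, on their right, a word `u` of length `n` with `u 0 ≠ a` and
`u ≠ x 1 ⋯ x n`. Such occurrences are so far apart that the exchanges do not interact, hence
they define an involution in `Aut(A^ℤ)`. It sends `a^∞ u ⋯` to `a^∞ x 1 ⋯ x d u ⋯`, so the
image of `Y` agrees with `x` on `0, …, d`. Let `d → ∞`.
-/

open Filter MeasureTheory

/-- The group of self-homeomorphisms of a topological space,
with `(f * g) x = f (g x)`. -/
instance homeoGroup (X : Type*) [TopologicalSpace X] : Group (X ≃ₜ X) where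
  mul f g := g.trans f
  one := Homeomorph.refl X
  inv := Homeomorph.symm
  mul_assoc f g h := Homeomorph.ext fun _ => rfl
  one_mul f := Homeomorph.ext fun _ => rfl
  mul_one f := Homeomorph.ext fun _ => rfl
  inv_mul_cancel f := Homeomorph.ext f.symm_apply_apply

/-- The left shift `(σ x) m = x (m+1)` on `A^ℤ`, as a homeomorphism. -/
def shiftHomeo (A : Type*) [TopologicalSpace A] : (ℤ → A) ≃ₜ (ℤ → A) where
  toFun x := fun m => x (m + 1)
  invFun x := fun m => x (m - 1)
  left_inv x := funext fun m => by simp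
  right_inv x := funext fun m => by simp
  continuous_toFun := continuous_pi fun m => continuous_apply (m + 1)
  continuous_invFun := continuous_pi fun m => continuous_apply (m - 1)

/-- `Aut(A^ℤ)`: the group of homeomorphisms of `A^ℤ` commuting with the shift. -/
def ShiftAut (A : Type*) [TopologicalSpace A] : Subgroup ((ℤ → A) ≃ₜ (ℤ → A)) :=
  Subgroup.centralizer {shiftHomeo A}

/-- `Ω`: the space of one-sided configurations whose zeroth symbol differs from
the first. -/
def OmegaSet (A : Type*) : Set (ℕ → A) := {x | x 0 ≠ x 1}

/-- `Ω^a`: the elements of `Ω` whose zeroth symbol is `a`. -/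
def OmegaA (A : Type*) (a : A) : Set (ℕ → A) := {x | x 0 = a ∧ x 0 ≠ x 1}

/-- `φ : Ω → A^ℤ_*` prepends an infinite constant `x 0` prefix to `x`. -/
def phiMap (A : Type*) (x : ℕ → A) : ℤ → A :=
  fun m => if m ≤ 0 then x 0 else x m.toNat

/-- `ℓ(y)`: the last coordinate of the constant prefix of `y ∈ A^ℤ_*`. -/
noncomputable def ellVal (A : Type*) (y : ℤ → A) : ℤ :=
  sInf {m : ℤ | y m ≠ y (m + 1)}

/-- The action of `Aut(A^ℤ)` on `Ω`: `g • x = ψ (g (φ x))`, where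
`ψ(y) = φ⁻¹(σ^{ℓ(y)} y)`, i.e. `(g • x) n = (g (φ x)) (ℓ (g (φ x)) + n)`. -/
noncomputable def omegaAct (A : Type*) [TopologicalSpace A]
    (g : (ℤ → A) ≃ₜ (ℤ → A)) (x : ℕ → A) : ℕ → A :=
  fun n => g (phiMap A x) (ellVal A (g (phiMap A x)) + n)

/-- `G* = ∩_{a ∈ A} G^a`, where `G^a` is the set of automorphisms that
preserve `Ω^a` under the action on `Ω`. -/
def Gstar (A : Type*) [TopologicalSpace A] : Set ((ℤ → A) ≃ₜ (ℤ → A)) :=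
  {g | g ∈ ShiftAut A ∧ ∀ a : A, omegaAct A g '' OmegaA A a = OmegaA A a}

/-- The metric on `ℕ → A` (with `A` discrete) inducing the product topology. -/
noncomputable local instance piNatMetric (A : Type*) [TopologicalSpace A]
    [DiscreteTopology A] : MetricSpace (ℕ → A) :=
  PiNat.metricSpace

open Set Topology

section Preliminaries

theorem tendsto_hausdorffDist_image_singleton {ι α β : Type*} [PseudoMetricSpace β]
    {F : ι → α → β} {x : β} {l : Filter ι} {s : Set α} (hs : s.Nonempty)
    (hF : TendstoUniformlyOn F (fun _ => x) l s) :
    Tendsto (fun k => Metric.hausdorffDist (F k '' s) {x}) l (𝓝 0) := by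
  refine Metric.tendsto_nhds.2 fun ε hε => ?_
  filter_upwards [Metric.tendstoUniformlyOn_iff.1 hF (ε / 2) (half_pos hε)] with k hk
  have hle : Metric.hausdorffDist (F k '' s) {x} ≤ ε / 2 := by
    refine Metric.hausdorffDist_le_of_mem_dist (half_pos hε).le ?_ ?_
    · rintro _ ⟨y, hy, rfl⟩
      exact ⟨x, rfl, dist_comm x (F k y) ▸ (hk y hy).le⟩
    · rintro _ rfl
      obtain ⟨y, hy⟩ := hs
      exact ⟨F k y, mem_image_of_mem _ hy, (hk y hy).le⟩
  rw [Real.dist_0_eq_abs, abs_of_nonneg Metric.hausdorffDist_nonneg]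
  exact hle.trans_lt (half_lt_self hε)

theorem continuousAt_pi_discrete_iff {ι β : Type*} {α : ι → Type*}
    [∀ i, TopologicalSpace (α i)] [∀ i, DiscreteTopology (α i)] [TopologicalSpace β]
    [DiscreteTopology β] {f : (∀ i, α i) → β} {x : ∀ i, α i} :
    ContinuousAt f x ↔ ∃ s : Set ι, s.Finite ∧ ∀ y, (∀ i ∈ s, y i = x i) → f y = f x := by
  simp only [ContinuousAt, nhds_discrete, tendsto_pure, nhds_pi, Filter.Eventually,
    Filter.mem_pi, mem_pure]
  constructor
  · rintro ⟨s, hs, t, ht, hst⟩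
    exact ⟨s, hs, fun y hy => hst fun i hi => by simpa only [hy i hi] using ht i⟩
  · rintro ⟨s, hs, hf⟩
    exact ⟨s, hs, fun i => {x i}, fun i => rfl, fun y hy => hf y hy⟩

variable {A : Type*} [TopologicalSpace A] [DiscreteTopology A] {x₀ : ℕ → A}

theorem exists_forall_exists_succ_ne {Y : Set (ℕ → A)} (hYc : IsClosed Y) (hx₀Y : x₀ ∉ Y)
    (hzero : ∀ y ∈ Y, y 0 = x₀ 0) : ∃ n : ℕ, ∀ y ∈ Y, ∃ i < n, y (i + 1) ≠ x₀ (i + 1) := by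
  obtain ⟨n, hn⟩ := PiNat.exists_disjoint_cylinder hYc hx₀Y
  refine ⟨n, fun y hy => ?_⟩
  by_contra! h
  refine disjoint_left.1 hn hy fun i hi => ?_
  rcases i with _ | i
  · exact hzero y hy
  · exact h i (i.lt_succ_self.trans hi)

theorem tendstoUniformlyOn_of_forall_le_eq {α : Type*} {F : ℕ → α → ℕ → A} {s : Set α}
    (hF : ∀ k, ∀ y ∈ s, ∀ i ≤ k, F k y i = x₀ i) :
    TendstoUniformlyOn F (fun _ => x₀) atTop s := by
  refine Metric.tendstoUniformlyOn_iff.2 fun ε hε => ?_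
  have hpow : Tendsto (fun k : ℕ => (1 / 2 : ℝ) ^ k) atTop (𝓝 0) :=
    tendsto_pow_atTop_nhds_zero_of_lt_one (by norm_num) (by norm_num)
  filter_upwards [hpow.eventually_lt_const hε] with k hk y hy
  rw [dist_comm]
  exact (PiNat.mem_cylinder_iff_dist_le.1 fun i hi => hF k y hy i hi.le).trans_lt hk

end Preliminaries

section Shift

variable {A : Type*}

/-- The power `σ^s` of the shift, for an alphabet without topology. -/
def shiftBy (s : ℤ) (y : ℤ → A) : ℤ → A :=
  fun i => y (i + s)

@[simp]
theorem shiftBy_apply (s : ℤ) (y : ℤ → A) (i : ℤ) : shiftBy s y i = y (i + s) :=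
  rfl

@[simp]
theorem shiftBy_zero (y : ℤ → A) : shiftBy 0 y = y :=
  funext fun i => by simp

theorem shiftBy_shiftBy (s t : ℤ) (y : ℤ → A) :
    shiftBy s (shiftBy t y) = shiftBy (s + t) y :=
  funext fun i => by simp [add_assoc]

variable [TopologicalSpace A]

theorem shiftHomeo_zpow_apply (s : ℤ) (y : ℤ → A) : (shiftHomeo A ^ s) y = shiftBy s y := by
  induction s with
  | zero => exact (shiftBy_zero y).symm
  | succ s ih =>
    rw [add_comm, zpow_one_add]
    exact (congrArg (shiftHomeo A) ih).trans (shiftBy_shiftBy 1 s y)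
  | pred s ih =>
    rw [sub_eq_add_neg, add_comm, zpow_add, zpow_neg_one]
    exact (congrArg (shiftHomeo A).symm ih).trans (shiftBy_shiftBy (-1) (-s) y)

theorem mem_shiftAut_iff {g : (ℤ → A) ≃ₜ (ℤ → A)} :
    g ∈ ShiftAut A ↔ ∀ s y, g (shiftBy s y) = shiftBy s (g y) := by
  refine Subgroup.mem_centralizer_singleton_iff.trans ⟨fun hg s y => ?_, fun hg => ?_⟩
  · have hcomm : Commute g (shiftHomeo A ^ s) := Commute.zpow_right hg s
    have happly : g ((shiftHomeo A ^ s) y) = (shiftHomeo A ^ s) (g y) :=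
      DFunLike.congr_fun hcomm.eq y
    rwa [shiftHomeo_zpow_apply, shiftHomeo_zpow_apply] at happly
  · exact Homeomorph.ext fun y => hg 1 y

end Shift

section Tails

variable {A : Type*} {b : A} {y : ℤ → A} {r : ℤ}

/-- The configurations of `A^ℤ_*` whose constant infinite prefix is made of the symbol `b`. -/
def leftConstant (b : A) : Set (ℤ → A) :=
  {y | (∀ᶠ i in atBot, y i = b) ∧ y ≠ Function.const ℤ b}

theorem ellVal_eq (hy : ∀ i ≤ r, y i = b) (hr : y (r + 1) ≠ b) : ellVal A y = r := by
  refine IsLeast.csInf_eq ⟨?_, fun m hm => ?_⟩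
  · exact (hy r le_rfl).trans_ne hr.symm
  · by_contra! hlt
    exact hm ((hy m hlt.le).trans (hy (m + 1) hlt).symm)

theorem exists_last_of_mem_leftConstant (hy : y ∈ leftConstant b) :
    ∃ l, (∀ i ≤ l, y i = b) ∧ y (l + 1) ≠ b := by
  obtain ⟨htail, hne⟩ := hy
  obtain ⟨r, hr⟩ := eventually_atBot.1 htail
  obtain ⟨m, hm, hmin⟩ := Int.exists_least_of_bdd (P := fun i => y i ≠ b)
    ⟨r, fun i hi => le_of_not_ge fun hir => hi (hr i hir)⟩ (Function.ne_iff.1 hne)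
  refine ⟨m - 1, fun i hi => ?_, by simpa only [sub_add_cancel] using hm⟩
  by_contra hib
  exact absurd (hmin i hib) (by omega)

theorem apply_eq_of_le_ellVal (hy : y ∈ leftConstant b) {i : ℤ} (hi : i ≤ ellVal A y) :
    y i = b := by
  obtain ⟨l, hl, hl'⟩ := exists_last_of_mem_leftConstant hy
  exact hl i (ellVal_eq hl hl' ▸ hi)

theorem apply_ellVal_add_one_ne (hy : y ∈ leftConstant b) : y (ellVal A y + 1) ≠ b := by
  obtain ⟨l, hl, hl'⟩ := exists_last_of_mem_leftConstant hy
  rwa [ellVal_eq hl hl']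

theorem ellVal_shiftBy (hy : y ∈ leftConstant b) (s : ℤ) :
    ellVal A (shiftBy s y) = ellVal A y - s := by
  refine ellVal_eq (b := b) (fun i hi => apply_eq_of_le_ellVal hy (by omega)) ?_
  rw [shiftBy_apply, show ellVal A y - s + 1 + s = ellVal A y + 1 by ring]
  exact apply_ellVal_add_one_ne hy

/-- The map `ψ : A^ℤ_* → Ω`, written without inverting `φ`. -/
noncomputable def psiMap (y : ℤ → A) : ℕ → A :=
  fun k => y (ellVal A y + k)

theorem psiMap_mem (hy : y ∈ leftConstant b) : psiMap y ∈ OmegaA A b := by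
  have hzero : psiMap y 0 = b := apply_eq_of_le_ellVal hy (by simp)
  exact ⟨hzero, hzero ▸ (apply_ellVal_add_one_ne hy).symm⟩

theorem psiMap_shiftBy (hy : y ∈ leftConstant b) (s : ℤ) : psiMap (shiftBy s y) = psiMap y := by
  funext k
  rw [psiMap, ellVal_shiftBy hy, shiftBy_apply, psiMap]
  congr 1
  ring

theorem phiMap_of_nonpos (x : ℕ → A) {i : ℤ} (hi : i ≤ 0) : phiMap A x i = x 0 :=
  if_pos hi

@[simp]
theorem phiMap_natCast (x : ℕ → A) (k : ℕ) : phiMap A x k = x k := by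
  rcases k with _ | k
  · exact phiMap_of_nonpos x le_rfl
  · exact if_neg (by omega)

theorem phiMap_psiMap (hy : y ∈ leftConstant b) :
    phiMap A (psiMap y) = shiftBy (ellVal A y) y := by
  funext i
  rcases le_total i 0 with hi | hi
  · rw [phiMap_of_nonpos _ hi, (psiMap_mem hy).1, shiftBy_apply,
      apply_eq_of_le_ellVal hy (by omega)]
  · lift i to ℕ using hi
    rw [phiMap_natCast, psiMap, shiftBy_apply, add_comm]

variable {x : ℕ → A}

theorem apply_one_ne_of_mem_OmegaA (hx : x ∈ OmegaA A b) : x 1 ≠ b :=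
  fun h => hx.2 (hx.1.trans h.symm)

theorem phiMap_one_ne (hx : x ∈ OmegaA A b) : phiMap A x 1 ≠ b := by
  simpa using (phiMap_natCast x 1).trans_ne (apply_one_ne_of_mem_OmegaA hx)

theorem phiMap_mem (hx : x ∈ OmegaA A b) : phiMap A x ∈ leftConstant b :=
  ⟨eventually_atBot.2 ⟨0, fun _ hi => (phiMap_of_nonpos x hi).trans hx.1⟩,
    Function.ne_iff.2 ⟨1, phiMap_one_ne hx⟩⟩

theorem psiMap_phiMap (hx : x ∈ OmegaA A b) : psiMap (phiMap A x) = x := by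
  have hell : ellVal A (phiMap A x) = 0 :=
    ellVal_eq (fun i hi => (phiMap_of_nonpos x hi).trans hx.1) (phiMap_one_ne hx)
  funext k
  rw [psiMap, hell, zero_add, phiMap_natCast]

end Tails

section Action

variable {A : Type*} [TopologicalSpace A] {b : A} {g h : (ℤ → A) ≃ₜ (ℤ → A)}

theorem omegaAct_mul (hg : g ∈ ShiftAut A) {x : ℕ → A} (hx : h (phiMap A x) ∈ leftConstant b)
    (hx' : g (h (phiMap A x)) ∈ leftConstant b) :
    omegaAct A (g * h) x = omegaAct A g (omegaAct A h x) := by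
  change psiMap (g (h (phiMap A x))) = psiMap (g (phiMap A (psiMap (h (phiMap A x)))))
  rw [phiMap_psiMap hx, mem_shiftAut_iff.1 hg, psiMap_shiftBy hx']

variable [DiscreteTopology A]

theorem apply_mem_leftConstant (hg : g ∈ ShiftAut A)
    (hb : g (Function.const ℤ b) = Function.const ℤ b) {y : ℤ → A} (hy : y ∈ leftConstant b) :
    g y ∈ leftConstant b := by
  refine ⟨?_, fun h => hy.2 (g.injective (h.trans hb.symm))⟩
  have hcont : ContinuousAt (fun z => g z 0) (Function.const ℤ b) :=
    ((continuous_apply 0).comp g.continuous).continuousAt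
  obtain ⟨s, hs, hloc⟩ := continuousAt_pi_discrete_iff.1 hcont
  have htail : ∀ᶠ m in atBot, ∀ i ∈ s, y (i + m) = b :=
    (eventually_all_finite hs).2 fun i _ =>
      (tendsto_atBot_add_const_left atBot i tendsto_id).eventually hy.1
  filter_upwards [htail] with m hm
  calc g y m = g (shiftBy m y) 0 := by rw [mem_shiftAut_iff.1 hg, shiftBy_apply, zero_add]
    _ = b := (hloc _ hm).trans (congrFun hb 0)

theorem omegaAct_image_OmegaA (hg : g ∈ ShiftAut A)
    (hb : g (Function.const ℤ b) = Function.const ℤ b) :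
    omegaAct A g '' OmegaA A b = OmegaA A b := by
  have hg' : g⁻¹ ∈ ShiftAut A := inv_mem hg
  have hb' : g⁻¹ (Function.const ℤ b) = Function.const ℤ b := g.symm_apply_eq.2 hb.symm
  refine Subset.antisymm ?_ fun x hx => ?_
  · rintro _ ⟨x, hx, rfl⟩
    exact psiMap_mem (apply_mem_leftConstant hg hb (phiMap_mem hx))
  · have hmem := apply_mem_leftConstant hg' hb' (phiMap_mem hx)
    refine ⟨omegaAct A g⁻¹ x, psiMap_mem hmem, ?_⟩
    rw [← omegaAct_mul hg hmem (apply_mem_leftConstant hg hb hmem), mul_inv_cancel]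
    exact psiMap_phiMap hx

theorem mem_Gstar_of_forall_const (hg : g ∈ ShiftAut A)
    (hconst : ∀ b, g (Function.const ℤ b) = Function.const ℤ b) : g ∈ Gstar A :=
  ⟨hg, fun b => omegaAct_image_OmegaA hg (hconst b)⟩

end Action

/-- A local rewriting rule whose occurrences do not interact: on the `active` configurations,
`move` is an involution which changes only the window `[0, length)`, it is determined by the
coordinates in `[-radius, length + radius)`, and the windows of two active translates of a
configuration are too far apart for either one to meet this neighborhood of the other. -/
structure LocalInvolution (A : Type*) where
  /-- The length of the rewritten window. -/
  length : ℕ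
  /-- The size of the context inspected on each side of the window. -/
  radius : ℕ
  /-- The configurations to which the rule applies at the origin. -/
  active : Set (ℤ → A)
  /-- The rewriting at the origin, meaningful only on `active`. -/
  move : (ℤ → A) → ℤ → A
  dependsOn_active : DependsOn (· ∈ active) (Ico (-radius : ℤ) (length + radius))
  dependsOn_move : ∀ i ∈ Ico (0 : ℤ) length,
    DependsOn (move · i) (Ico (-radius : ℤ) (length + radius))
  move_apply_of_notMem : ∀ y, ∀ i ∉ Ico (0 : ℤ) length, move y i = y i
  move_mem : ∀ y ∈ active, move y ∈ active
  move_move : ∀ y ∈ active, move (move y) = y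
  le_abs_of_active : ∀ y ∈ active, ∀ s, shiftBy s y ∈ active → s ≠ 0 → length + radius ≤ |s|

namespace LocalInvolution

variable {A : Type*} (T : LocalInvolution A) {y : ℤ → A} {s t i : ℤ}

/-- The window of `y` that starts at `s` is active and contains `i`. -/
def Covers (y : ℤ → A) (s i : ℤ) : Prop :=
  shiftBy s y ∈ T.active ∧ i - s ∈ Ico (0 : ℤ) T.length

open Classical in
/-- The simultaneous application of the rule at all active windows. At most one active window
covers a given coordinate, so the choice of a covering window is immaterial. -/
noncomputable def sweep (y : ℤ → A) : ℤ → A :=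
  fun i => if h : ∃ s, T.Covers y s i then T.move (shiftBy h.choose y) (i - h.choose) else y i

variable {T}

theorem le_abs_sub (hs : shiftBy s y ∈ T.active) (ht : shiftBy t y ∈ T.active) (hst : s ≠ t) :
    T.length + T.radius ≤ |t - s| := by
  refine T.le_abs_of_active _ hs (t - s) ?_ (sub_ne_zero.2 hst.symm)
  rwa [shiftBy_shiftBy, sub_add_cancel]

theorem Covers.eq_of_mem (hs : shiftBy s y ∈ T.active) (ht : T.Covers y t i)
    (hi : i - s ∈ Ico (-T.radius : ℤ) (T.length + T.radius)) : s = t := by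
  by_contra hst
  have hfar := le_abs_sub hs ht.1 hst
  have hcov := ht.2
  grind

theorem sweep_apply_of_forall_not (h : ∀ s, ¬ T.Covers y s i) : T.sweep y i = y i :=
  dif_neg (not_exists.2 h)

theorem Covers.sweep_apply (h : T.Covers y s i) :
    T.sweep y i = T.move (shiftBy s y) (i - s) := by
  have hex : ∃ t, T.Covers y t i := ⟨s, h⟩
  have hchoose : s = hex.choose :=
    hex.choose_spec.eq_of_mem h.1 ⟨by have := h.2.1; omega, by have := h.2.2; omega⟩
  rw [sweep, dif_pos hex, ← hchoose]

theorem shiftBy_sweep_apply (hs : shiftBy s y ∈ T.active)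
    (hi : i ∈ Ico (-T.radius : ℤ) (T.length + T.radius)) :
    shiftBy s (T.sweep y) i = T.move (shiftBy s y) i := by
  have hi' : i + s - s ∈ Ico (-T.radius : ℤ) (T.length + T.radius) := by
    rwa [add_sub_cancel_right]
  by_cases hwin : i ∈ Ico (0 : ℤ) T.length
  · have hcov : T.Covers y s (i + s) := ⟨hs, by rwa [add_sub_cancel_right]⟩
    rw [shiftBy_apply, hcov.sweep_apply, add_sub_cancel_right]
  · rw [T.move_apply_of_notMem _ _ hwin, shiftBy_apply, shiftBy_apply,
      sweep_apply_of_forall_not fun t ht => hwin ?_]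
    obtain rfl := ht.eq_of_mem hs hi'
    simpa only [add_sub_cancel_right] using ht.2

theorem shiftBy_sweep_mem_active_iff :
    shiftBy s (T.sweep y) ∈ T.active ↔ shiftBy s y ∈ T.active := by
  have mem_sweep {t : ℤ} (ht : shiftBy t y ∈ T.active) : shiftBy t (T.sweep y) ∈ T.active :=
    (T.dependsOn_active fun _ hi => shiftBy_sweep_apply ht hi).mpr (T.move_mem _ ht)
  refine ⟨fun hs => ?_, mem_sweep⟩
  by_contra hns
  refine hns ((T.dependsOn_active fun i hi => ?_).mp hs)
  refine sweep_apply_of_forall_not fun t ht => hns ?_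
  have hst : s = t := Covers.eq_of_mem hs ⟨mem_sweep ht.1, ht.2⟩ (by rwa [add_sub_cancel_right])
  exact hst ▸ ht.1

theorem covers_sweep_iff : T.Covers (T.sweep y) s i ↔ T.Covers y s i :=
  and_congr_left' shiftBy_sweep_mem_active_iff

variable (T) in
theorem sweep_involutive : Function.Involutive T.sweep := by
  intro y
  funext i
  by_cases h : ∃ s, T.Covers y s i
  · obtain ⟨s, hs⟩ := h
    calc T.sweep (T.sweep y) i
        = T.move (shiftBy s (T.sweep y)) (i - s) := (covers_sweep_iff.2 hs).sweep_apply
      _ = T.move (T.move (shiftBy s y)) (i - s) :=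
          T.dependsOn_move _ hs.2 fun _ hj => shiftBy_sweep_apply hs.1 hj
      _ = y i := by rw [T.move_move _ hs.1, shiftBy_apply, sub_add_cancel]
  · rw [not_exists] at h
    rw [sweep_apply_of_forall_not fun s => mt covers_sweep_iff.1 (h s),
      sweep_apply_of_forall_not h]

theorem covers_shiftBy_iff : T.Covers (shiftBy t y) s i ↔ T.Covers y (s + t) (i + t) := by
  rw [Covers, Covers, shiftBy_shiftBy, add_sub_add_right_eq_sub]

variable (T) in
theorem sweep_shiftBy (t : ℤ) (y : ℤ → A) :
    T.sweep (shiftBy t y) = shiftBy t (T.sweep y) := by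
  funext i
  rw [shiftBy_apply]
  by_cases h : ∃ s, T.Covers (shiftBy t y) s i
  · obtain ⟨s, hs⟩ := h
    rw [hs.sweep_apply, (covers_shiftBy_iff.1 hs).sweep_apply, shiftBy_shiftBy,
      add_sub_add_right_eq_sub]
  · rw [not_exists] at h
    have h' (s : ℤ) : ¬ T.Covers y s (i + t) := fun hs =>
      h (s - t) (covers_shiftBy_iff.2 (by rwa [sub_add_cancel]))
    rw [sweep_apply_of_forall_not h, sweep_apply_of_forall_not h', shiftBy_apply]

theorem sweep_eq_self (h : ∀ s, shiftBy s y ∉ T.active) : T.sweep y = y :=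
  funext fun _ => sweep_apply_of_forall_not fun s hs => h s hs.1

variable (T) in
theorem dependsOn_sweep (i : ℤ) :
    DependsOn (T.sweep · i) (Icc (i - (T.length + T.radius)) (i + (T.length + T.radius))) := by
  intro y z hyz
  have eq_near {s : ℤ} (hs : i - s ∈ Ico (0 : ℤ) T.length) :
      ∀ j ∈ Ico (-T.radius : ℤ) (T.length + T.radius), shiftBy s y j = shiftBy s z j := by
    simp only [mem_Ico, mem_Icc] at *
    exact fun j hj => hyz _ (by omega)
  have covers_iff (s : ℤ) : T.Covers y s i ↔ T.Covers z s i :=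
    and_congr_left fun hs => iff_of_eq (T.dependsOn_active (eq_near hs))
  by_cases h : ∃ s, T.Covers y s i
  · obtain ⟨s, hs⟩ := h
    simp only [hs.sweep_apply, ((covers_iff s).1 hs).sweep_apply]
    exact T.dependsOn_move _ hs.2 (eq_near hs.2)
  · rw [not_exists] at h
    simp only [sweep_apply_of_forall_not h,
      sweep_apply_of_forall_not fun s => mt (covers_iff s).2 (h s)]
    exact hyz i ⟨by omega, by omega⟩

variable [TopologicalSpace A] [DiscreteTopology A]

variable (T) in
theorem continuous_sweep : Continuous T.sweep :=
  continuous_pi fun i => continuous_iff_continuousAt.2 fun _ =>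
    continuousAt_pi_discrete_iff.2 ⟨_, finite_Icc _ _, fun _ h => T.dependsOn_sweep i h⟩

variable (T) in
/-- The automorphism of `A^ℤ` which applies the rule at all active windows. -/
noncomputable def sweepHomeo : (ℤ → A) ≃ₜ (ℤ → A) where
  toEquiv := T.sweep_involutive.toPerm
  continuous_toFun := T.continuous_sweep
  continuous_invFun := T.continuous_sweep

variable (T) in
theorem sweepHomeo_mem_shiftAut : T.sweepHomeo ∈ ShiftAut A :=
  mem_shiftAut_iff.2 T.sweep_shiftBy

end LocalInvolution

section WordSwap

variable {A : Type*} {a : A} {w : ℤ → A} {n d : ℕ} {y : ℤ → A}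

/-- The window `[0, d)` of `y` contains `a^d` or the word `w 0 ⋯ w (d - 1)`, it is preceded by
`a^(d+n)`, and it is followed by a word `u` of length `n` with `u 0 ≠ a` and
`u ≠ w 0 ⋯ w (n - 1)`. -/
structure IsSwapSite (a : A) (w : ℤ → A) (n d : ℕ) (y : ℤ → A) : Prop where
  left_eq : ∀ i ∈ Ico (-(d + n) : ℤ) 0, y i = a
  window_eq : (∀ i ∈ Ico (0 : ℤ) d, y i = a) ∨ ∀ i ∈ Ico (0 : ℤ) d, y i = w i
  right_ne : y d ≠ a
  exists_right_ne : ∃ i ∈ Ico (0 : ℤ) n, y (d + i) ≠ w i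

open Classical in
/-- Exchanges the words `a^d` and `w 0 ⋯ w (d - 1)` in the window `[0, d)`. Where `w 0 ≠ a`, the
first symbol tells which of the two words is present. -/
noncomputable def swapWord (a : A) (w : ℤ → A) (d : ℕ) (y : ℤ → A) : ℤ → A :=
  (Ico (0 : ℤ) d).piecewise (if y 0 = a then w else Function.const ℤ a) y

theorem swapWord_apply_of_notMem {i : ℤ} (hi : i ∉ Ico (0 : ℤ) d) : swapWord a w d y i = y i :=
  piecewise_eq_of_notMem _ _ _ hi

theorem swapWord_apply_of_eq (hy : y 0 = a) {i : ℤ} (hi : i ∈ Ico (0 : ℤ) d) :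
    swapWord a w d y i = w i := by
  rw [swapWord, piecewise_eq_of_mem _ _ _ hi, if_pos hy]

theorem swapWord_apply_of_ne (hy : y 0 ≠ a) {i : ℤ} (hi : i ∈ Ico (0 : ℤ) d) :
    swapWord a w d y i = a := by
  rw [swapWord, piecewise_eq_of_mem _ _ _ hi, if_neg hy, Function.const_apply]

namespace IsSwapSite

theorem pos (h : IsSwapSite a w n d y) : 0 < n := by
  obtain ⟨i, hi, -⟩ := h.exists_right_ne
  exact_mod_cast hi.1.trans_lt hi.2

theorem congr {z : ℤ → A} (h : IsSwapSite a w n d y)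
    (hyz : ∀ i ∈ Ico (-(d + n : ℕ) : ℤ) (d + (d + n : ℕ)), y i = z i) :
    IsSwapSite a w n d z := by
  have hn := h.pos
  simp only [mem_Ico] at hyz
  obtain ⟨i, hi, hne⟩ := h.exists_right_ne
  rw [mem_Ico] at hi
  refine ⟨fun j hj => ?_, h.window_eq.imp (fun hw j hj => ?_) fun hw j hj => ?_, ?_,
    i, mem_Ico.2 hi, ?_⟩
  · rw [← hyz j (by grind), h.left_eq j hj]
  · rw [← hyz j (by grind), hw j hj]
  · rw [← hyz j (by grind), hw j hj]
  · rw [← hyz d (by omega)]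
    exact h.right_ne
  · rwa [← hyz _ (by omega)]

end IsSwapSite

theorem isSwapSite_swapWord (h : IsSwapSite a w n d y) : IsSwapSite a w n d (swapWord a w d y) := by
  obtain ⟨i, hi, hne⟩ := h.exists_right_ne
  refine ⟨fun j hj => ?_, ?_, ?_, i, hi, ?_⟩
  · rw [swapWord_apply_of_notMem fun hj' => hj.2.not_ge hj'.1, h.left_eq j hj]
  · by_cases hy : y 0 = a
    · exact .inr fun j hj => swapWord_apply_of_eq hy hj
    · exact .inl fun j hj => swapWord_apply_of_ne hy hj
  · rw [swapWord_apply_of_notMem right_notMem_Ico]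
    exact h.right_ne
  · rwa [swapWord_apply_of_notMem fun hi' => by grind]

theorem swapWord_swapWord (hw : w 0 ≠ a) (hnd : n ≤ d) (h : IsSwapSite a w n d y) :
    swapWord a w d (swapWord a w d y) = y := by
  have hzero : (0 : ℤ) ∈ Ico (0 : ℤ) d := ⟨le_rfl, by have := h.pos; omega⟩
  funext i
  by_cases hi : i ∈ Ico (0 : ℤ) d
  · rcases h.window_eq with hy | hy
    · rw [swapWord_apply_of_ne (by rwa [swapWord_apply_of_eq (hy 0 hzero) hzero]) hi, hy i hi]
    · have hy0 : y 0 ≠ a := hy 0 hzero ▸ hw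
      rw [swapWord_apply_of_eq (swapWord_apply_of_ne hy0 hzero) hi, hy i hi]
  · rw [swapWord_apply_of_notMem hi, swapWord_apply_of_notMem hi]

/-- The right context of the first site starts with a symbol other than `a`, which the left context
of the second cannot contain, so if the two are close the second window starts inside the first or
right after it. Its contents then fit only as `a^d` followed by `w 0 ⋯ w (d - 1)`, and this is
excluded because the right context of the first site differs from `w 0 ⋯ w (n - 1)`. -/
theorem IsSwapSite.lt_of_pos (hw : w 0 ≠ a) (hnd : n ≤ d) (h : IsSwapSite a w n d y) {s : ℤ}
    (h' : IsSwapSite a w n d (shiftBy s y)) (hs : 0 < s) : d + (d + n : ℕ) < s := by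
  by_contra! hle
  have hn := h.pos
  have left_eq' {i : ℤ} (hi : s - (d + n) ≤ i) (his : i < s) : y i = a := by
    simpa using h'.left_eq (i - s) ⟨by omega, by omega⟩
  have hsd : s ≤ d := by
    by_contra! hds
    exact h.right_ne (left_eq' (by omega) hds)
  rcases h.window_eq with hy | hy
  · rcases h'.window_eq with hy' | hy'
    · exact h.right_ne (by simpa using hy' (d - s) ⟨by omega, by omega⟩)
    · have hs_ne : y s ≠ a := by
        simpa using (hy' 0 ⟨le_rfl, by omega⟩).trans_ne hw
      obtain rfl : s = d := hsd.antisymm (not_lt.1 fun hlt => hs_ne (hy s ⟨hs.le, hlt⟩))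
      obtain ⟨i, hi, hne⟩ := h.exists_right_ne
      refine hne ?_
      simpa [add_comm] using hy' i ⟨hi.1, by have := hi.2; omega⟩
  · exact hw ((hy 0 ⟨le_rfl, by omega⟩).symm.trans (left_eq' (by omega) hs))

/-- The exchange of `a^d` and `w 0 ⋯ w (d - 1)` at swap sites, as a local involution. -/
noncomputable def wordSwap (hw : w 0 ≠ a) (hnd : n ≤ d) : LocalInvolution A where
  length := d
  radius := d + n
  active := {y | IsSwapSite a w n d y}
  move := swapWord a w d
  dependsOn_active _ _ hyz := propext ⟨fun h => h.congr hyz, fun h => h.congr fun i hi =>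
    (hyz i hi).symm⟩
  dependsOn_move i hi y z hyz := by
    have hyz0 : y 0 = z 0 := hyz 0 ⟨by omega, by have := hi.1.trans_lt hi.2; omega⟩
    by_cases hy : y 0 = a
    · simp only [swapWord_apply_of_eq hy hi, swapWord_apply_of_eq (hyz0 ▸ hy) hi]
    · simp only [swapWord_apply_of_ne hy hi, swapWord_apply_of_ne (hyz0 ▸ hy) hi]
  move_apply_of_notMem _ _ hi := swapWord_apply_of_notMem hi
  move_mem _ h := isSwapSite_swapWord h
  move_move _ h := swapWord_swapWord hw hnd h
  le_abs_of_active y h s h' hs := by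
    rcases hs.lt_or_gt with hs | hs
    · have h'' : IsSwapSite a w n d (shiftBy (-s) (shiftBy s y)) := by
        rwa [shiftBy_shiftBy, neg_add_cancel, shiftBy_zero]
      exact (h'.lt_of_pos hw hnd h'' (neg_pos.2 hs)).le.trans (neg_le_abs s)
    · exact (h.lt_of_pos hw hnd h' hs).le.trans (le_abs_self s)

theorem sweepHomeo_wordSwap_mem_Gstar [TopologicalSpace A] [DiscreteTopology A] (hw : w 0 ≠ a)
    (hnd : n ≤ d) :
    (wordSwap hw hnd).sweepHomeo ∈ Gstar A := by
  refine mem_Gstar_of_forall_const (LocalInvolution.sweepHomeo_mem_shiftAut _) fun b =>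
    LocalInvolution.sweep_eq_self fun s hs => ?_
  have hsite : IsSwapSite a w n d (Function.const ℤ b) := hs
  have hn := hsite.pos
  exact hsite.right_ne (hsite.left_eq (-1) ⟨by omega, by omega⟩)

variable {x x₀ : ℕ → A}

theorem isSwapSite_shiftBy_phiMap (hx : x ∈ OmegaA A a)
    (hne : ∃ i < n, x (i + 1) ≠ w i) :
    IsSwapSite a w n d (shiftBy (1 - d) (phiMap A x)) where
  left_eq i hi := (phiMap_of_nonpos x (by have := hi.2; omega)).trans hx.1
  window_eq := .inl fun i hi => (phiMap_of_nonpos x (by have := hi.2; omega)).trans hx.1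
  right_ne := by simpa using phiMap_one_ne hx
  exists_right_ne := by
    obtain ⟨i, hi, hne⟩ := hne
    refine ⟨i, ⟨by omega, by omega⟩, ?_⟩
    rwa [shiftBy_apply, show (d + i + (1 - d) : ℤ) = (i + 1 : ℕ) by push_cast; ring,
      phiMap_natCast]

theorem sweep_phiMap_of_le (hw : w 0 ≠ a) (hnd : n ≤ d) (hx : x ∈ OmegaA A a) {i : ℤ}
    (hi : i ≤ -d) : (wordSwap hw hnd).sweep (phiMap A x) i = a := by
  refine (LocalInvolution.sweep_apply_of_forall_not fun s hs => ?_).trans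
    ((phiMap_of_nonpos x (by omega)).trans hx.1)
  have hsite : IsSwapSite a w n d (shiftBy s (phiMap A x)) := hs.1
  have hsi : 0 ≤ i - s := hs.2.1
  exact hsite.right_ne ((phiMap_of_nonpos x (by omega)).trans hx.1)

theorem sweep_phiMap_of_nonpos (hw : w 0 ≠ a) (hnd : n ≤ d) (hx : x ∈ OmegaA A a)
    (hne : ∃ i < n, x (i + 1) ≠ w i) {i : ℤ} (hdi : -d < i) (hi : i ≤ 0) :
    (wordSwap hw hnd).sweep (phiMap A x) i = w (i + d - 1) := by
  have hmem : i - (1 - d) ∈ Ico (0 : ℤ) d := ⟨by omega, by omega⟩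
  have hcov : (wordSwap hw hnd).Covers (phiMap A x) (1 - d) i :=
    ⟨isSwapSite_shiftBy_phiMap hx hne, hmem⟩
  have hzero : shiftBy (1 - d) (phiMap A x) 0 = a :=
    (phiMap_of_nonpos x (by have := hmem.1.trans_lt hmem.2; omega)).trans hx.1
  rw [hcov.sweep_apply, show i + d - 1 = i - (1 - d) by ring]
  exact swapWord_apply_of_eq hzero hmem

theorem omegaAct_wordSwap_apply [TopologicalSpace A] [DiscreteTopology A]
    (hx₀ : x₀ ∈ OmegaA A a) (hw : shiftBy 1 (phiMap A x₀) 0 ≠ a) (hnd : n ≤ d)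
    (hx : x ∈ OmegaA A a) (hxx₀ : ∃ i < n, x (i + 1) ≠ x₀ (i + 1)) {k : ℕ} (hk : k ≤ d) :
    omegaAct A (wordSwap hw hnd).sweepHomeo x k = x₀ k := by
  have hd : 0 < d := by
    obtain ⟨i, hi, -⟩ := hxx₀
    omega
  have shiftBy_phiMap_apply (j : ℕ) : shiftBy 1 (phiMap A x₀) j = x₀ (j + 1) := by
    exact_mod_cast phiMap_natCast x₀ (j + 1)
  have hne : ∃ i < n, x (i + 1) ≠ shiftBy 1 (phiMap A x₀) i := by
    simpa only [shiftBy_phiMap_apply] using hxx₀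
  have sweep_apply {j : ℕ} (hj : j < d) :
      (wordSwap hw hnd).sweep (phiMap A x) (-d + (j + 1 : ℕ)) = x₀ (j + 1) := by
    rw [sweep_phiMap_of_nonpos hw hnd hx hne (by omega) (by omega), ← shiftBy_phiMap_apply]
    congr 1
    push_cast
    ring
  have hell : ellVal A ((wordSwap hw hnd).sweep (phiMap A x)) = -d :=
    ellVal_eq (fun i => sweep_phiMap_of_le hw hnd hx)
      ((sweep_apply hd).trans_ne (apply_one_ne_of_mem_OmegaA hx₀))
  change (wordSwap hw hnd).sweep (phiMap A x)
    (ellVal A ((wordSwap hw hnd).sweep (phiMap A x)) + k) = x₀ k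
  rw [hell]
  rcases k with _ | k
  · exact (sweep_phiMap_of_le hw hnd hx (by simp)).trans hx₀.1.symm
  · exact sweep_apply hk

end WordSwap

section Proximality

variable {A : Type*} [TopologicalSpace A] [DiscreteTopology A] {a : A} {Y : Set (ℕ → A)}
  {x₀ : ℕ → A}

theorem gstar_extremelyProximal_general (hYa : Y ⊆ OmegaA A a) (hYc : IsClosed Y)
    (hY : Y.Nonempty) (hx₀ : x₀ ∈ OmegaA A a) (hx₀Y : x₀ ∉ Y) :
    ∃ g : ℕ → (ℤ → A) ≃ₜ (ℤ → A), (∀ k, g k ∈ Gstar A) ∧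
      Tendsto (fun k => Metric.hausdorffDist (omegaAct A (g k) '' Y) {x₀}) atTop (𝓝 0) := by
  obtain ⟨n, hn⟩ := exists_forall_exists_succ_ne hYc hx₀Y fun y hy =>
    (hYa hy).1.trans hx₀.1.symm
  have hw : shiftBy 1 (phiMap A x₀) 0 ≠ a := phiMap_one_ne hx₀
  refine ⟨fun k => (wordSwap hw (Nat.le_add_right n k)).sweepHomeo,
    fun k => sweepHomeo_wordSwap_mem_Gstar hw _, tendsto_hausdorffDist_image_singleton hY ?_⟩
  exact tendstoUniformlyOn_of_forall_le_eq fun k y hy i hi =>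
    omegaAct_wordSwap_apply hx₀ hw _ (hYa hy) (hn y hy) (hi.trans (Nat.le_add_left k n))

end Proximality

/-- The action of `G*` on `Ω^a` is extremely proximal: for every closed proper
nonempty subset `Y` of `Ω^a` there is a sequence in `G*` moving `Y` to a
singleton in the Hausdorff metric. -/
theorem gstar_extremelyProximal
    (A : Type*) [Fintype A] [TopologicalSpace A] [DiscreteTopology A]
    (hA : 2 ≤ Fintype.card A) (a : A) :
    ∀ Y : Set (ℕ → A), Y ⊆ OmegaA A a → IsClosed Y → Y.Nonempty → Y ≠ OmegaA A a →
      ∃ (g : ℕ → (ℤ → A) ≃ₜ (ℤ → A)) (x : ℕ → A),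
        (∀ k, g k ∈ Gstar A) ∧ x ∈ OmegaA A a ∧
        Tendsto (fun k => Metric.hausdorffDist (omegaAct A (g k) '' Y) {x})
          atTop (nhds 0) := by
  intro Y hYa hYc hY hne
  obtain ⟨x, hx, hxY⟩ := exists_of_ssubset (hYa.ssubset_of_ne hne)
  obtain ⟨g, hg, hlim⟩ := gstar_extremelyProximal_general hYa hYc hY hx hxY
  exact ⟨g, x, hg, hx, hlim⟩
end

section
/- Let A be a finite alphabet with |A| ≥ 2. The group Aut(A^ℤ) contains a free subgroup on two generators; in particular, Aut(A^ℤ) is not amenable. -/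
/-- A group is amenable if there is a left-invariant mean on its
bounded real-valued functions. -/
def IsAmenable (G : Type*) [Group G] : Prop :=
  ∃ m : (G → ℝ) → ℝ,
    (∀ f₁ f₂ : G → ℝ, (∃ C, ∀ x, |f₁ x| ≤ C) → (∃ C, ∀ x, |f₂ x| ≤ C) →
      m (f₁ + f₂) = m f₁ + m f₂) ∧
    (∀ (c : ℝ) (f : G → ℝ), (∃ C, ∀ x, |f x| ≤ C) → m (c • f) = c * m f) ∧
    (∀ f : G → ℝ, (∃ C, ∀ x, |f x| ≤ C) → (∀ x, 0 ≤ f x) → 0 ≤ m f) ∧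
    m (fun _ => 1) = 1 ∧
    (∀ (g : G) (f : G → ℝ), (∃ C, ∀ x, |f x| ≤ C) →
      m (fun x => f (g * x)) = m f)

/-!
Amenability passes to subgroups and fails for a free group, by the paradoxical decomposition into
words with a given first letter. It therefore suffices to find a free subgroup of `Aut(A^ℤ)`.

If occurrences of some words of equal length, indexed by `D`, never overlap, then permutations of
`D` act on configurations by automorphisms that replace all occurrences at once. Write two distinct
letters as `0`, `1` and code a bit sequence by alternating cells, a bit `c` being stored as `0c00`
at even places and as the complementary word at odd places. Neither the words made of an even and
an odd cell nor those made of an odd and an even cell overlap. So a permutation of pairs of bits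
yields two automorphisms `p` and `q`, acting on the pairs of bits at `(2k, 2k + 1)` and at
`(2k - 1, 2k)` respectively.

For the three-cycle `10 ↦ 01 ↦ 11 ↦ 10`, all nontrivial powers fix `00` and send `10` to a pair
ending in `1`. Hence the nontrivial powers of `p` move a last `1` at an even place one step to the
right, and those of `q` do the same at odd places. Thus `p` and `q` play ping-pong on the sequences
whose last `1` is at an even or an odd place, and `p q p`, `q p q` freely generate a free group.
-/

open Set Function
open scoped Pointwise

/-! ### Amenability -/

section Amenability

variable {G F : Type*} [Group G] [Group F]

/-- `μ` is a left-invariant finitely additive probability measure defined on all subsets of a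
group: the restriction of an invariant mean to indicator functions. -/
structure IsInvariantContent (μ : Set G → ℝ) : Prop where
  nonneg : ∀ s, 0 ≤ μ s
  univ : μ univ = 1
  union : ∀ s t, Disjoint s t → μ (s ∪ t) = μ s + μ t
  smul : ∀ (g : G) s, μ (g • s) = μ s

namespace IsInvariantContent

variable {μ : Set G → ℝ} {s t : Set G}

lemma mono (hμ : IsInvariantContent μ) (hst : s ⊆ t) : μ s ≤ μ t := by
  rw [← union_sdiff_cancel hst, hμ.union _ _ disjoint_sdiff_right]
  exact le_add_of_nonneg_right (hμ.nonneg _)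

lemma union_le (hμ : IsInvariantContent μ) (s t : Set G) : μ (s ∪ t) ≤ μ s + μ t := by
  rw [← union_sdiff_self, hμ.union _ _ disjoint_sdiff_right]
  gcongr
  exact hμ.mono sdiff_subset

lemma one_le_union (hμ : IsInvariantContent μ) (hst : Disjoint s t) {g : G}
    (hcover : g • s ∪ t = Set.univ) : 1 ≤ μ (s ∪ t) :=
  calc
    1 = μ (g • s ∪ t) := by rw [hcover, hμ.univ]
    _ ≤ μ (g • s) + μ t := hμ.union_le _ _
    _ = μ (s ∪ t) := by rw [hμ.smul, hμ.union _ _ hst]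

end IsInvariantContent

lemma IsAmenable.exists_isInvariantContent (hG : IsAmenable G) :
    ∃ μ : Set G → ℝ, IsInvariantContent μ := by
  obtain ⟨m, hadd, -, hpos, hone, hinv⟩ := hG
  have bdd : ∀ s : Set G, ∃ C : ℝ, ∀ x, |s.indicator 1 x| ≤ C := fun s =>
    ⟨1, fun x => by by_cases hx : x ∈ s <;> simp [hx]⟩
  refine ⟨fun s => m (s.indicator 1), fun s => ?_, ?_, fun s t hst => ?_, fun g s => ?_⟩
  · exact hpos _ (bdd s) (indicator_nonneg fun _ _ => zero_le_one)
  · rw [indicator_univ]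
    exact hone
  · rw [indicator_union_of_disjoint hst]
    exact hadd _ _ (bdd s) (bdd t)
  · rw [← hinv g⁻¹ _ (bdd s)]
    congr 1 with x
    classical simp only [indicator_apply, mem_smul_set_iff_inv_smul_mem, smul_eq_mul, Pi.one_apply]

theorem not_isAmenable_of_paradoxical {S₁ S₂ T₁ T₂ : Set G} {g h : G} (hS : Disjoint S₁ S₂)
    (hT : Disjoint T₁ T₂) (hST : Disjoint (S₁ ∪ S₂) (T₁ ∪ T₂)) (hgS : g • S₁ ∪ S₂ = univ)
    (hhT : h • T₁ ∪ T₂ = univ) : ¬ IsAmenable G := by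
  intro hG
  obtain ⟨μ, hμ⟩ := hG.exists_isInvariantContent
  have htotal : μ (S₁ ∪ S₂) + μ (T₁ ∪ T₂) ≤ 1 := by
    rw [← hμ.union _ _ hST, ← hμ.univ]
    exact hμ.mono (subset_univ _)
  linarith [hμ.one_le_union hS hgS, hμ.one_le_union hT hhT]

theorem not_isAmenable_freeGroup (α : Type*) [Nontrivial α] : ¬ IsAmenable (FreeGroup α) := by
  classical
  obtain ⟨i, j, hij⟩ := exists_pair_ne α
  have hcover : ∀ k : α, (FreeGroup.mk [(k, true)])⁻¹ • FreeGroup.startsWith (k, true) ∪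
      FreeGroup.startsWith (k, false) = univ := by
    refine fun k => eq_univ_of_forall fun x => or_iff_not_imp_right.2 fun hx => ?_
    rw [mem_inv_smul_set_iff]
    exact FreeGroup.startsWith_mk_mul x hx
  refine not_isAmenable_of_paradoxical ?_ ?_ ?_ (hcover i) (hcover j) <;> simp [hij]

lemma exists_equivariant_of_injective {f : F →* G} (hf : Injective f) :
    ∃ h : G → F, ∀ w g, h (f w * g) = w * h g := by
  obtain ⟨T, hT, -⟩ := f.range.exists_isComplement_right 1
  refine ⟨fun g => (f.ofInjective hf).symm (hT.equiv g).1, fun w g => ?_⟩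
  have hfst : (hT.equiv (f w * g)).1 = f.ofInjective hf w * (hT.equiv g).1 := by
    rw [hT.equiv_mul_left_of_mem ⟨w, rfl⟩]
    rfl
  simp only [hfst, map_mul, MulEquiv.symm_apply_apply]

theorem IsAmenable.of_injective (hG : IsAmenable G) {f : F →* G} (hf : Injective f) :
    IsAmenable F := by
  obtain ⟨m, hadd, hsmul, hpos, hone, hinv⟩ := hG
  obtain ⟨h, hh⟩ := exists_equivariant_of_injective hf
  have bdd : ∀ φ : F → ℝ, (∃ C, ∀ x, |φ x| ≤ C) → ∃ C, ∀ g, |φ (h g)| ≤ C :=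
    fun φ ⟨C, hC⟩ => ⟨C, fun g => hC (h g)⟩
  refine ⟨fun φ => m (φ ∘ h), fun φ ψ hφ hψ => hadd _ _ (bdd φ hφ) (bdd ψ hψ),
    fun c φ hφ => hsmul c _ (bdd φ hφ), fun φ hφ h0 => hpos _ (bdd φ hφ) fun g => h0 (h g),
    hone, fun w φ hφ => ?_⟩
  simpa only [comp_def, hh] using hinv (f w) (φ ∘ h) (bdd φ hφ)

end Amenability

/-! ### Ping-pong -/

section PingPong

variable {G X : Type*} [Group G] [MulAction G X]

theorem freeGroup_lift_injective_of_zpow_ping_pong {ι : Type*} [Nontrivial ι] (a : ι → G)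
    (S : ι → Set X) (hne : ∀ i, (S i).Nonempty) (hdisj : Pairwise (Disjoint on S))
    (hpp : Pairwise fun i j => ∀ n : ℤ, n ≠ 0 → a i ^ n • S j ⊆ S i) :
    Injective (FreeGroup.lift a) := by
  have hlift : FreeGroup.lift a =
      (Monoid.CoprodI.lift fun i => FreeGroup.lift fun _ : Unit => a i).comp
        (freeGroupEquivCoprodI (ι := ι)).toMonoidHom := by
    ext i
    simp
  rw [hlift, MonoidHom.coe_comp]
  refine Injective.comp ?_ freeGroupEquivCoprodI.injective
  have hcard : 3 ≤ Cardinal.mk (FreeGroup Unit) := by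
    rw [Cardinal.mk_congr FreeGroup.freeGroupUnitEquivInt, Cardinal.mk_int]
    exact (Cardinal.natCast_lt_aleph0 (n := 3)).le
  refine Monoid.CoprodI.lift_injective_of_ping_pong _ (.inr ⟨Classical.arbitrary ι, hcard⟩) S hne
    hdisj fun i j hij w hw => ?_
  obtain ⟨n, rfl⟩ : ∃ n : ℤ, FreeGroup.of () ^ n = w :=
    FreeGroup.freeGroupUnitEquivInt.symm.surjective w
  rw [map_zpow, FreeGroup.lift_apply_of]
  exact hpp hij n (by rintro rfl; exact hw (zpow_zero _))

lemma mul_mul_pow_succ_smul_subset {p q : G} {E O : Set X} (hp : p • E ⊆ O)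
    (hpp : (p * p) • E ⊆ O) (hq : q • O ⊆ E) (n : ℕ) : (p * q * p) ^ (n + 1) • E ⊆ O := by
  refine Subset.trans ?_ hp
  induction n with
  | zero =>
    rw [zero_add, pow_one, mul_assoc, mul_smul, mul_smul]
    exact smul_set_mono ((smul_set_mono hp).trans hq)
  | succ n ih =>
    calc
      (p * q * p) ^ (n + 2) • E = (p * q * p) • (p * q * p) ^ (n + 1) • E := by
        rw [smul_smul, ← pow_succ']
      _ ⊆ (p * q * p) • p • E := smul_set_mono ih
      _ = p • q • (p * p) • E := by simp only [smul_smul, mul_assoc]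
      _ ⊆ p • E := smul_set_mono ((smul_set_mono hpp).trans hq)

lemma mul_mul_zpow_smul_subset {p q : G} {E O : Set X}
    (hp : ∀ k : ℤ, k ≠ 0 → |k| ≤ 2 → p ^ k • E ⊆ O)
    (hq : ∀ k : ℤ, k ≠ 0 → |k| ≤ 2 → q ^ k • O ⊆ E) {n : ℤ} (hn : n ≠ 0) :
    (p * q * p) ^ n • E ⊆ O := by
  obtain ⟨k, rfl | rfl⟩ : ∃ k : ℕ, n = (k + 1 : ℕ) ∨ n = -(k + 1 : ℕ) :=
    ⟨n.natAbs - 1, by omega⟩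
  · rw [zpow_natCast]
    refine mul_mul_pow_succ_smul_subset ?_ ?_ ?_ k
    · simpa using hp 1 (by decide) (by decide)
    · simpa [pow_two] using hp 2 (by decide) (by decide)
    · simpa using hq 1 (by decide) (by decide)
  · have hinv : (p * q * p)⁻¹ = p⁻¹ * q⁻¹ * p⁻¹ := by simp [mul_assoc]
    rw [zpow_neg, zpow_natCast, ← inv_pow, hinv]
    refine mul_mul_pow_succ_smul_subset ?_ ?_ ?_ k
    · simpa using hp (-1) (by decide) (by decide)
    · simpa [pow_two] using hp (-2) (by decide) (by decide)
    · simpa using hq (-1) (by decide) (by decide)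

theorem exists_freeGroup_hom_injective_of_ping_pong {p q : G} {E O : Set X} (hE : E.Nonempty)
    (hO : O.Nonempty) (hEO : Disjoint E O) (hp : ∀ k : ℤ, k ≠ 0 → |k| ≤ 2 → p ^ k • E ⊆ O)
    (hq : ∀ k : ℤ, k ≠ 0 → |k| ≤ 2 → q ^ k • O ⊆ E) :
    ∃ f : FreeGroup (Fin 2) →* G, Injective f := by
  refine ⟨FreeGroup.lift ![p * q * p, q * p * q],
    freeGroup_lift_injective_of_zpow_ping_pong _ ![O, E] ?_ ?_ ?_⟩
  · simp [Fin.forall_fin_two, hE, hO]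
  · simp [Pairwise, Fin.forall_fin_two, onFun, hEO, hEO.symm]
  · simpa [Pairwise, Fin.forall_fin_two] using
      ⟨fun n => mul_mul_zpow_smul_subset hp hq, fun n => mul_mul_zpow_smul_subset hq hp⟩

end PingPong

/-! ### Rewriting words without overlaps -/

lemma continuous_of_dependsOn_finite {ι β : Type*} {α : ι → Type*} [∀ i, TopologicalSpace (α i)]
    [∀ i, DiscreteTopology (α i)] [TopologicalSpace β] {f : (∀ i, α i) → β} {s : Set ι}
    (hs : s.Finite) (hf : DependsOn f s) : Continuous f := by
  refine IsLocallyConstant.continuous ((IsLocallyConstant.iff_eventually_eq f).2 fun x => ?_)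
  have hagree : ∀ᶠ y in nhds x, ∀ i ∈ s, y i = x i :=
    (Filter.eventually_all_finite hs).2 fun i _ =>
      (continuous_apply i).continuousAt ((isOpen_discrete {x i}).mem_nhds rfl)
  exact hagree.mono fun y hy => hf hy

section Rewriting

variable {A D : Type*} {N : ℕ}

/-- The finite word `u` occurs in the configuration `x` at the places `j, …, j + N - 1`. -/
def OccursAt (u : Fin N → A) (x : ℤ → A) (j : ℤ) : Prop :=
  ∀ r : Fin N, x (j + r) = u r

lemma OccursAt.append {M : ℕ} {u : Fin M → A} {v : Fin N → A} {x : ℤ → A} {j : ℤ}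
    (hu : OccursAt u x j) (hv : OccursAt v x (j + M)) : OccursAt (Fin.append u v) x j := by
  refine Fin.addCases (fun r => ?_) fun r => ?_
  · simpa using hu r
  · simpa [add_assoc] using hv r

/-- Distinct occurrences of words of the family `w` in a configuration never share a place; this
includes that the words are distinct (if nonempty). -/
def OverlapFree (w : D → Fin N → A) : Prop :=
  ∀ ⦃x : ℤ → A⦄ ⦃i j : ℤ⦄ ⦃d d' : D⦄ ⦃r r' : Fin N⦄, OccursAt (w d) x i → OccursAt (w d') x j →
    i + r = j + r' → i = j ∧ d = d'

lemma overlapFree_of_forall_ne {w : D → Fin N → A} (hinj : Injective w)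
    (hne : ∀ d d' (k : Fin N), 0 < (k : ℕ) →
      ∃ r r' : Fin N, (r : ℕ) = k + r' ∧ w d r ≠ w d' r') : OverlapFree w := by
  have no_overlap : ∀ {x : ℤ → A} {i j : ℤ} {d d' : D}, OccursAt (w d) x i → OccursAt (w d') x j →
      i < j → i + N ≤ j := by
    intro x i j d d' h h' hij
    by_contra! hlt
    obtain ⟨r, r', hr, hne⟩ := hne d d' ⟨(j - i).toNat, by omega⟩ (by simp; omega)
    refine hne ?_
    rw [← h r, ← h' r']
    congr 1
    simp only at hr
    omega
  intro x i j d d' r r' h h' hr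
  obtain hij | rfl | hij := lt_trichotomy i j
  · have := no_overlap h h' hij
    omega
  · exact ⟨rfl, hinj (funext fun r => (h r).symm.trans (h' r))⟩
  · have := no_overlap h' h hij
    omega

/-- The place `m` belongs to an occurrence in `x` of a word of the family `w`. -/
def IsCovered (w : D → Fin N → A) (x : ℤ → A) (m : ℤ) : Prop :=
  ∃ p : ℤ × D × Fin N, OccursAt (w p.2.1) x p.1 ∧ p.1 + p.2.2 = m

open Classical in
/-- Replace every occurrence in `x` of a word `w d` by `w (π d)`. The occurrence that
contains a given place is unique if `w` is overlap-free. -/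
noncomputable def rewriteWords (w : D → Fin N → A) (π : Equiv.Perm D) (x : ℤ → A) (m : ℤ) : A :=
  if h : IsCovered w x m then w (π h.choose.2.1) h.choose.2.2 else x m

variable {w : D → Fin N → A}

lemma rewriteWords_of_not_isCovered (π : Equiv.Perm D) {x : ℤ → A} {m : ℤ} (h : ¬ IsCovered w x m) :
    rewriteWords w π x m = x m :=
  dif_neg h

lemma OccursAt.rewrite (hw : OverlapFree w) (π : Equiv.Perm D) {x : ℤ → A} {j : ℤ} {d : D}
    (h : OccursAt (w d) x j) : OccursAt (w (π d)) (rewriteWords w π x) j := by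
  intro r
  have hcov : IsCovered w x (j + r) := ⟨(j, d, r), h, rfl⟩
  obtain ⟨hocc, hr⟩ := hcov.choose_spec
  obtain ⟨hj, hd⟩ := hw hocc h hr
  rw [rewriteWords, dif_pos hcov, hd]
  congr 1
  omega

lemma eq_rewriteWords (hw : OverlapFree w) {π : Equiv.Perm D} {x y : ℤ → A}
    (hocc : ∀ j d, OccursAt (w d) x j → OccursAt (w (π d)) y j)
    (hout : ∀ m, ¬ IsCovered w x m → y m = x m) : y = rewriteWords w π x := by
  funext m
  by_cases hm : IsCovered w x m
  · obtain ⟨⟨j, d, r⟩, h, rfl⟩ := hm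
    exact (hocc j d h r).trans (h.rewrite hw π r).symm
  · rw [hout m hm, rewriteWords_of_not_isCovered π hm]

/-- An occurrence in `rewriteWords w π x` meets an occurrence in `x`, since otherwise it would be
one itself; by overlap-freeness it is then the rewritten version of the latter. -/
lemma IsCovered.of_rewriteWords (hw : OverlapFree w) {π : Equiv.Perm D} {x : ℤ → A} {m : ℤ}
    (h : IsCovered w (rewriteWords w π x) m) : IsCovered w x m := by
  obtain ⟨⟨j, d, r⟩, h, rfl⟩ := h
  by_cases hmeet : ∃ r' : Fin N, IsCovered w x (j + r')
  · obtain ⟨r', ⟨i, d', s⟩, h', hs⟩ := hmeet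
    obtain ⟨rfl, -⟩ := hw (h'.rewrite hw π) h hs
    exact ⟨(i, d', r), h', rfl⟩
  · push Not at hmeet
    exact ⟨(j, d, r), fun r' => (rewriteWords_of_not_isCovered π (hmeet r')).symm.trans (h r'), rfl⟩

lemma rewriteWords_one (hw : OverlapFree w) (x : ℤ → A) : rewriteWords w 1 x = x :=
  (eq_rewriteWords hw (fun _ _ h => h) fun _ _ => rfl).symm

lemma rewriteWords_mul (hw : OverlapFree w) (π ρ : Equiv.Perm D) (x : ℤ → A) :
    rewriteWords w (π * ρ) x = rewriteWords w π (rewriteWords w ρ x) := by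
  refine (eq_rewriteWords hw (fun _ _ h => (h.rewrite hw ρ).rewrite hw π) fun m hm => ?_).symm
  rw [rewriteWords_of_not_isCovered π (mt (IsCovered.of_rewriteWords hw) hm),
    rewriteWords_of_not_isCovered ρ hm]

lemma occursAt_shift {u : Fin N → A} {x : ℤ → A} {j : ℤ} :
    OccursAt u (fun m => x (m + 1)) j ↔ OccursAt u x (j + 1) := by
  simp only [OccursAt, add_right_comm]

lemma rewriteWords_shift (hw : OverlapFree w) (π : Equiv.Perm D) (x : ℤ → A) :
    rewriteWords w π (fun m => x (m + 1)) = fun m => rewriteWords w π x (m + 1) := by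
  refine (eq_rewriteWords hw (fun j d h => ?_) fun m hm => ?_).symm
  · exact occursAt_shift.2 ((occursAt_shift.1 h).rewrite hw π)
  · refine rewriteWords_of_not_isCovered π fun ⟨⟨j, d, r⟩, h, hr⟩ => hm ⟨(j - 1, d, r), ?_,
      by dsimp only at hr ⊢; omega⟩
    rwa [occursAt_shift, sub_add_cancel]

lemma dependsOn_rewriteWords (hw : OverlapFree w) (π : Equiv.Perm D) (m : ℤ) :
    DependsOn (fun x : ℤ → A => rewriteWords w π x m) (Icc (m - N) (m + N)) := by
  intro x y hxy
  have hocc : ∀ {j d} {r : Fin N}, j + r = m → (OccursAt (w d) x j ↔ OccursAt (w d) y j) :=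
    fun hr => forall_congr' fun r' => by rw [hxy _ ⟨by omega, by omega⟩]
  by_cases hm : IsCovered w x m
  · obtain ⟨⟨j, d, r⟩, h, rfl⟩ := hm
    exact (h.rewrite hw π r).trans (((hocc rfl).1 h).rewrite hw π r).symm
  · have hm' : ¬ IsCovered w y m := fun ⟨p, h, hr⟩ => hm ⟨p, (hocc hr).2 h, hr⟩
    simp only [rewriteWords_of_not_isCovered π hm, rewriteWords_of_not_isCovered π hm']
    exact hxy m ⟨by omega, by omega⟩

variable [TopologicalSpace A] [DiscreteTopology A]

lemma continuous_rewriteWords (hw : OverlapFree w) (π : Equiv.Perm D) :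
    Continuous (rewriteWords w π) :=
  continuous_pi fun m =>
    continuous_of_dependsOn_finite (finite_Icc _ _) (dependsOn_rewriteWords hw π m)

/-- The action of the permutations of an overlap-free family of words on the full shift. -/
noncomputable def rewriteHom (hw : OverlapFree w) : Equiv.Perm D →* ShiftAut A where
  toFun π :=
    ⟨{ toFun := rewriteWords w π
       invFun := rewriteWords w π⁻¹
       left_inv := fun x => by rw [← rewriteWords_mul hw, inv_mul_cancel, rewriteWords_one hw]
       right_inv := fun x => by rw [← rewriteWords_mul hw, mul_inv_cancel, rewriteWords_one hw]
       continuous_toFun := continuous_rewriteWords hw π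
       continuous_invFun := continuous_rewriteWords hw π⁻¹ },
      Subgroup.mem_centralizer_singleton_iff.2 (Homeomorph.ext (rewriteWords_shift hw π))⟩
  map_one' := Subtype.ext (Homeomorph.ext (rewriteWords_one hw))
  map_mul' π ρ := Subtype.ext (Homeomorph.ext (rewriteWords_mul hw π ρ))

end Rewriting

/-! ### Coding bit sequences by configurations -/

section Coding

/-- The word storing the bit `c` at a place of parity `ε`: `0c00` if `ε` is even (`false`) and its
complement if `ε` is odd (`true`). -/
def cell (ε c : Bool) (r : Fin 4) : Bool :=
  xor ε (c && decide (r = 1))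

variable {A : Type*} (ι : Bool → A)

/-- The word storing a pair of bits at two consecutive places, the first of which has parity `ε`,
in the letters `ι false` and `ι true`. -/
def cellPair (ε : Bool) (d : Bool × Bool) : Fin (4 + 4) → A :=
  Fin.append (ι ∘ cell ε d.1) (ι ∘ cell (!ε) d.2)

/-- The configuration storing the bit `s n` at `4n, …, 4n + 3`, for all `n`. -/
def encode (s : ℤ → Bool) (m : ℤ) : A :=
  ι (xor (m / 4).bodd (s (m / 4) && decide (m % 4 = 1)))

/-- Apply `π` to the pairs of bits at `(n, n + 1)` for all `n` of parity `ε`. -/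
def mapPairs (ε : Bool) (π : Equiv.Perm (Bool × Bool)) (s : ℤ → Bool) (n : ℤ) : Bool :=
  if n.bodd = ε then (π (s n, s (n + 1))).1 else (π (s (n - 1), s n)).2

/-- The bit sequences having a last `1`, at a place of parity `ε`. -/
def lastOne (ε : Bool) : Set (ℤ → Bool) :=
  {s | ∃ n, IsGreatest {k | s k = true} n ∧ n.bodd = ε}

variable {ι}

lemma overlapFree_cellPair (hι : Injective ι) (ε : Bool) : OverlapFree (cellPair ι ε) := by
  have hcomp : ∀ d r, cellPair ι ε d r = ι (cellPair id ε d r) := fun d r => by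
    refine Fin.addCases (fun r => ?_) (fun r => ?_) r <;>
      simp only [cellPair, Fin.append_left, Fin.append_right, comp_apply, id]
  have hinj : ∀ ε d d', cellPair id ε d = cellPair id ε d' → d = d' := by decide
  have hne : ∀ ε d d' (k : Fin (4 + 4)), 0 < (k : ℕ) →
      ∃ r r' : Fin (4 + 4), (r : ℕ) = k + r' ∧ cellPair id ε d r ≠ cellPair id ε d' r' := by
    decide
  refine overlapFree_of_forall_ne (fun d d' h => ?_) fun d d' k hk => ?_
  · exact hinj ε d d' (funext fun r => hι (by rw [← hcomp, ← hcomp, h]))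
  · obtain ⟨r, r', hr, hrr'⟩ := hne ε d d' k hk
    exact ⟨r, r', hr, by rw [hcomp, hcomp]; exact hι.ne hrr'⟩

lemma occursAt_encode_cell (s : ℤ → Bool) (n : ℤ) :
    OccursAt (ι ∘ cell n.bodd (s n)) (encode ι s) (4 * n) := by
  intro r
  have hdiv : (4 * n + r) / 4 = n := by omega
  have hmod : (4 * n + (r : ℤ)) % 4 = 1 ↔ r = 1 := by omega
  simp only [encode, comp_apply, cell, hdiv, hmod]

lemma occursAt_encode_cellPair (s : ℤ → Bool) (n : ℤ) :
    OccursAt (cellPair ι n.bodd (s n, s (n + 1))) (encode ι s) (4 * n) := by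
  refine (occursAt_encode_cell s n).append ?_
  simpa [mul_add, Int.bodd_add] using occursAt_encode_cell (ι := ι) s (n + 1)

lemma encode_injective (hι : Injective ι) : Injective (encode ι) := by
  intro s t hst
  funext n
  have hcell : cell n.bodd (s n) 1 = cell n.bodd (t n) 1 :=
    hι ((occursAt_encode_cell s n 1).symm.trans (hst ▸ occursAt_encode_cell t n 1))
  simpa [cell] using hcell

lemma mapPairs_pair (π : Equiv.Perm (Bool × Bool)) (s : ℤ → Bool) (n : ℤ) :
    (mapPairs n.bodd π s n, mapPairs n.bodd π s (n + 1)) = π (s n, s (n + 1)) := by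
  simp [mapPairs, Int.bodd_add]

lemma rewriteWords_encode (hι : Injective ι) (ε : Bool) (π : Equiv.Perm (Bool × Bool))
    (s : ℤ → Bool) : rewriteWords (cellPair ι ε) π (encode ι s) = encode ι (mapPairs ε π s) := by
  funext m
  obtain ⟨n, r, rfl, rfl⟩ : ∃ (n : ℤ) (r : Fin (4 + 4)), n.bodd = ε ∧ 4 * n + r = m := by
    by_cases h : (m / 4).bodd = ε
    · exact ⟨m / 4, ⟨(m % 4).toNat, by omega⟩, h, by simp only; omega⟩
    · refine ⟨m / 4 - 1, ⟨(m % 4 + 4).toNat, by omega⟩, ?_, by simp only; omega⟩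
      simpa [sub_eq_add_neg, Int.bodd_add] using Bool.eq_not.2 h
  have hrewrite := (occursAt_encode_cellPair s n).rewrite (overlapFree_cellPair hι _) π r
  rw [hrewrite, ← mapPairs_pair]
  exact (occursAt_encode_cellPair (mapPairs n.bodd π s) n r).symm

lemma lastOne_nonempty (ε : Bool) : (lastOne ε).Nonempty :=
  ⟨fun k => decide (k = ε.toNat), ε.toNat, by simp, by cases ε <;> rfl⟩

lemma disjoint_lastOne : Disjoint (lastOne false) (lastOne true) := by
  rw [Set.disjoint_left]
  rintro s ⟨n, hn, hε⟩ ⟨k, hk, hδ⟩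
  simp [hn.unique hk, hδ] at hε

lemma mapPairs_mem_lastOne {ε : Bool} {π : Equiv.Perm (Bool × Bool)}
    (h00 : π (false, false) = (false, false)) (h10 : (π (true, false)).2 = true)
    {s : ℤ → Bool} (hs : s ∈ lastOne ε) : mapPairs ε π s ∈ lastOne (!ε) := by
  obtain ⟨n, ⟨hn, hmax⟩, rfl⟩ := hs
  have hzero : ∀ k, n < k → s k = false := fun k hk =>
    Bool.eq_false_iff.2 fun h => (hmax h).not_gt hk
  refine ⟨n + 1, ⟨?_, fun k hk => ?_⟩, by simp [Int.bodd_add]⟩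
  · have hpair := mapPairs_pair π s n
    rw [hn, hzero (n + 1) (by omega)] at hpair
    exact (congrArg Prod.snd hpair).trans h10
  · by_contra! hlt
    simp [mapPairs, hzero k (by omega), hzero (k + 1) (by omega), hzero (k - 1) (by omega),
      h00] at hk

end Coding

/-! ### A free subgroup of the automorphism group of the full shift -/

/-- The three-cycle `10 ↦ 01 ↦ 11 ↦ 10` of pairs of bits. -/
def threeCycle : Equiv.Perm (Bool × Bool) where
  toFun d := (d.2, xor d.1 d.2)
  invFun d := (xor d.1 d.2, d.1)
  left_inv := by decide
  right_inv := by decide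

lemma threeCycle_zpow {k : ℤ} (hk : k ≠ 0) (hk2 : |k| ≤ 2) :
    (threeCycle ^ k) (false, false) = (false, false) ∧
      ((threeCycle ^ k) (true, false)).2 = true := by
  obtain ⟨hl, hu⟩ := abs_le.1 hk2
  interval_cases k <;> first | exact absurd rfl hk | decide

section FreeSubgroup

variable (A : Type*) [TopologicalSpace A]

/-- The evaluation action of `Aut(A^ℤ)` on configurations. -/
instance shiftAutMulAction : MulAction (ShiftAut A) (ℤ → A) where
  smul g x := g.1 x
  one_smul _ := rfl
  mul_smul _ _ _ := rfl

variable {A} [DiscreteTopology A] {ι : Bool → A}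

lemma rewriteHom_zpow_smul_lastOne_subset (hι : Injective ι) (ε : Bool) {k : ℤ} (hk : k ≠ 0)
    (hk2 : |k| ≤ 2) :
    rewriteHom (overlapFree_cellPair hι ε) threeCycle ^ k • encode ι '' lastOne ε ⊆
      encode ι '' lastOne (!ε) := by
  obtain ⟨h00, h10⟩ := threeCycle_zpow hk hk2
  rw [← map_zpow]
  rintro _ ⟨_, ⟨s, hs, rfl⟩, rfl⟩
  exact ⟨_, mapPairs_mem_lastOne h00 h10 hs, (rewriteWords_encode hι ε _ s).symm⟩

variable (A)

theorem exists_freeGroup_hom_shiftAut_injective [Nontrivial A] :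
    ∃ f : FreeGroup (Fin 2) →* ShiftAut A, Injective f := by
  obtain ⟨a, b, hab⟩ := exists_pair_ne A
  have hι : Injective fun c : Bool => if c then a else b := by
    simp [Injective, Bool.forall_bool, hab, hab.symm]
  exact exists_freeGroup_hom_injective_of_ping_pong ((lastOne_nonempty false).image _)
    ((lastOne_nonempty true).image _)
    ((disjoint_image_iff (encode_injective hι)).2 disjoint_lastOne)
    (fun _ => rewriteHom_zpow_smul_lastOne_subset hι false)
    fun _ => rewriteHom_zpow_smul_lastOne_subset hι true

end FreeSubgroup

theorem shiftAut_free_subgroup_not_amenable_general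
    (A : Type*) [Nontrivial A] [TopologicalSpace A] [DiscreteTopology A] :
    (∃ f : FreeGroup (Fin 2) →* ShiftAut A, Function.Injective f) ∧
      ¬ IsAmenable (ShiftAut A) := by
  obtain ⟨f, hf⟩ := exists_freeGroup_hom_shiftAut_injective A
  exact ⟨⟨f, hf⟩, fun hA => not_isAmenable_freeGroup (Fin 2) (hA.of_injective hf)⟩

/-- `Aut(A^ℤ)` contains a free subgroup on two generators; in particular it is
not amenable. -/
theorem shiftAut_free_subgroup_not_amenable
    (A : Type*) [Fintype A] [TopologicalSpace A] [DiscreteTopology A]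
    (hA : 2 ≤ Fintype.card A) :
    (∃ f : FreeGroup (Fin 2) →* ShiftAut A, Function.Injective f) ∧
      ¬ IsAmenable (ShiftAut A) :=
  have : Nontrivial A := Fintype.one_lt_card_iff_nontrivial.1 hA
  shiftAut_free_subgroup_not_amenable_general A
end

section
/- Fix d ≥ 1 and k ∈ ℕ with k ≥ 1. Let U_k ⊆ ℤ^d be the ℤ-span of the vectors r_1, …, r_{d−1}, where r_i = e_i + k·e_{i+1} (e_1, …, e_d the standard basis of ℤ^d). Then every nonzero element u ∈ U_k has Euclidean norm strictly greater than k. -/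
/-!
Read a vector of `ℤ^d` as the coefficients of a polynomial of degree `< d`, so that `r_i` becomes
`(k X + 1) X^i` and `U_k` consists of multiples of `k X + 1`. Lowest and highest coefficients are
multiplicative, hence a nonzero multiple of `k X + 1` has a lowest coefficient of absolute value at
least `1` and a highest coefficient of absolute value at least `k`. They sit at different degrees,
so the sum of the squared coefficients is at least `1 + k²`.
-/

open scoped BigOperators

/-- The vector `r_i = e_i + k·e_{i+1}` in `ℤ^d` (zero-indexed:
for `i < d - 1`, `rVec d k i = e_i + k e_{i+1}`; `rVec d k (d-1) = e_{d-1}`). -/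
def rVec (d k : ℕ) (i : ℕ) : Fin d → ℤ :=
  fun j => if (j : ℕ) = i then 1 else if (j : ℕ) = i + 1 then (k : ℤ) else 0

/-- `U_k`: the `ℤ`-span of `r_0, …, r_{d-2}` in `ℤ^d`. -/
def UkSpan (d k : ℕ) : Submodule ℤ (Fin d → ℤ) :=
  Submodule.span ℤ {v | ∃ i : ℕ, i < d - 1 ∧ v = rVec d k i}

/-- The Euclidean norm on `ℤ^d`. -/
noncomputable def euclNorm (d : ℕ) (v : Fin d → ℤ) : ℝ :=
  Real.sqrt (∑ j : Fin d, ((v j : ℝ)) ^ 2)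

section Multiples

open Polynomial

variable {R : Type*}

lemma coeff_sq_add_coeff_sq_le_sum_sq [Ring R] [LinearOrder R] [IsOrderedRing R]
    (p : R[X]) {i j : ℕ} (hij : i ≠ j) :
    p.coeff i ^ 2 + p.coeff j ^ 2 ≤ p.sum fun _ a => a ^ 2 := by
  rw [p.sum_eq_of_subset _ (by simp) (p.support.subset_union_left (s₂ := {i, j})),
    ← Finset.sum_pair (f := fun n => p.coeff n ^ 2) hij]
  exact Finset.sum_le_sum_of_subset_of_nonneg Finset.subset_union_right
    fun n _ _ => sq_nonneg (p.coeff n)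

lemma natTrailingDegree_lt_natDegree_of_dvd [Semiring R] [NoZeroDivisors R] {p q : R[X]}
    (hp : p.natTrailingDegree < p.natDegree) (hpq : p ∣ q) (hq : q ≠ 0) :
    q.natTrailingDegree < q.natDegree := by
  obtain ⟨s, rfl⟩ := hpq
  have hp0 : p ≠ 0 := left_ne_zero_of_mul hq
  have hs0 : s ≠ 0 := right_ne_zero_of_mul hq
  rw [natTrailingDegree_mul hp0 hs0, natDegree_mul hp0 hs0]
  exact add_lt_add_of_lt_of_le hp s.natTrailingDegree_le_natDegree

lemma trailingCoeff_dvd_trailingCoeff [Semiring R] [NoZeroDivisors R] {p q : R[X]} (h : p ∣ q) :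
    p.trailingCoeff ∣ q.trailingCoeff := by
  obtain ⟨s, rfl⟩ := h
  exact ⟨s.trailingCoeff, trailingCoeff_mul p s⟩

lemma int_sq_le_sq_of_dvd {m n : ℤ} (h : m ∣ n) (hn : n ≠ 0) : m ^ 2 ≤ n ^ 2 :=
  Int.le_of_dvd (by positivity) (pow_dvd_pow_of_dvd h 2)

lemma trailingCoeff_sq_add_leadingCoeff_sq_le_sum_sq_of_dvd {p q : ℤ[X]}
    (hp : p.natTrailingDegree < p.natDegree) (hpq : p ∣ q) (hq : q ≠ 0) :
    p.trailingCoeff ^ 2 + p.leadingCoeff ^ 2 ≤ q.sum fun _ a => a ^ 2 :=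
  calc p.trailingCoeff ^ 2 + p.leadingCoeff ^ 2
    _ ≤ q.trailingCoeff ^ 2 + q.leadingCoeff ^ 2 := by
      gcongr ?_ + ?_
      · exact int_sq_le_sq_of_dvd (trailingCoeff_dvd_trailingCoeff hpq)
          (trailingCoeff_eq_zero.not.mpr hq)
      · exact int_sq_le_sq_of_dvd (leadingCoeff_dvd_leadingCoeff hpq)
          (leadingCoeff_ne_zero.mpr hq)
    _ ≤ q.sum fun _ a => a ^ 2 :=
      coeff_sq_add_coeff_sq_le_sum_sq q (natTrailingDegree_lt_natDegree_of_dvd hp hpq hq).ne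

lemma one_add_sq_le_sum_sq_of_linear_dvd {c : ℤ} (hc : c ≠ 0) {q : ℤ[X]}
    (hcq : C c * X + C 1 ∣ q) (hq : q ≠ 0) : 1 + c ^ 2 ≤ q.sum fun _ a => a ^ 2 := by
  have hcoeff : (C c * X + C 1).coeff 0 = 1 := by simp
  have htrail : (C c * X + C 1).natTrailingDegree = 0 :=
    natTrailingDegree_eq_zero.mpr (.inr (by simp))
  have hdeg : (C c * X + C 1).natTrailingDegree < (C c * X + C 1).natDegree := by
    simp only [htrail, natDegree_linear hc, zero_lt_one]
  have hle := trailingCoeff_sq_add_leadingCoeff_sq_le_sum_sq_of_dvd hdeg hcq hq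
  rwa [trailingCoeff, htrail, hcoeff, leadingCoeff_linear hc, one_pow] at hle

end Multiples

section GeneratingPolynomial

open Polynomial

lemma sum_sq_eq_ofFn_sum_sq {R : Type*} [Semiring R] [DecidableEq R] {n : ℕ} (v : Fin n → R) :
    ∑ j, v j ^ 2 = (ofFn n v).sum fun _ a => a ^ 2 := by
  rw [← sum_fin _ (by simp) (ofFn_degree_lt v)]
  simp

lemma ofFn_rVec {d i : ℕ} (k : ℕ) (hi : i + 1 < d) :
    ofFn d (rVec d k i) = (C (k : ℤ) * X + C 1) * X ^ i := by
  ext n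
  simp only [add_mul, mul_assoc, ← pow_succ', coeff_add, coeff_C_mul, coeff_X_pow]
  rcases lt_or_ge n d with hn | hn
  · rw [ofFn_coeff_eq_val_of_lt _ hn, rVec]
    grind
  · rw [ofFn_coeff_eq_zero_of_ge _ hn]
    grind

lemma linear_dvd_ofFn_of_mem_ukSpan {d k : ℕ} {u : Fin d → ℤ} (hu : u ∈ UkSpan d k) :
    C (k : ℤ) * X + C 1 ∣ ofFn d u := by
  induction hu using Submodule.span_induction with
  | mem v hv =>
    obtain ⟨i, hi, rfl⟩ := hv
    exact ⟨X ^ i, ofFn_rVec k (by lia)⟩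
  | zero => simp
  | add v w _ _ hv hw => simpa only [map_add] using dvd_add hv hw
  | smul a v _ hv => simpa only [map_smul] using dvd_smul_of_dvd a hv

end GeneratingPolynomial

/-- Every nonzero element of `U_k` has Euclidean norm strictly greater
than `k`. -/
theorem ukSpan_norm_gt
    (d k : ℕ) (hd : 1 ≤ d) (hk : 1 ≤ k)
    (u : Fin d → ℤ) (hu : u ∈ UkSpan d k) (hne : u ≠ 0) :
    (k : ℝ) < euclNorm d u := by
  have hpoly : Polynomial.ofFn d u ≠ 0 :=
    (map_ne_zero_iff _ (Polynomial.injective_ofFn d)).mpr hne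
  have hsum : (k : ℤ) ^ 2 < ∑ j, u j ^ 2 := by
    rw [sum_sq_eq_ofFn_sum_sq]
    refine (lt_one_add _).trans_le ?_
    exact one_add_sq_le_sum_sq_of_linear_dvd (by lia) (linear_dvd_ofFn_of_mem_ukSpan hu) hpoly
  refine Real.lt_sqrt_of_sq_lt ?_
  exact_mod_cast hsum
end
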